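/- arXiv:1208.0446 — 10 statements merged into one kernel-verified Lean document; each statement's English description precedes it below -/
import Mathlib

section
/- Let f be the Shapley operator of a zero-sum two-player stochastic game with finite state space {1,…,n}, finite action sets and stochastic transition vectors. Then for all η, v ∈ ℝⁿ there exists T ∈ ℝ such that for every t ≥ T one has f(tη + v) = t·f̂(η) + f_η(v), where f̂ is the recession function of f and f_η is the tangent of f at infinity around the slope η. -/
open Filter Topology

theorem aux_sup {ι : Type} [Finite ι] [Nonempty ι] (p q : ι → ℝ) :
    ∀ᶠ t : ℝ in atTop, (⨆ i, (t * p i + q i)) =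
      t * (⨆ i, p i) + ⨆ i : {i : ι // p i = ⨆ j, p j}, q i.1 := by
  obtain ⟨i0, hi0⟩ := exists_eq_ciSup_of_finite (f := p)
  have : Nonempty {i : ι // p i = ⨆ j, p j} := ⟨⟨i0, hi0⟩⟩
  obtain ⟨i1, hi1⟩ := exists_eq_ciSup_of_finite
    (f := fun i : {i : ι // p i = ⨆ j, p j} => q i.1)
  have key : ∀ᶠ t : ℝ in atTop, ∀ i, t * p i + q i ≤
      t * (⨆ i, p i) + ⨆ i : {i : ι // p i = ⨆ j, p j}, q i.1 := by
    rw [eventually_all]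
    intro i
    by_cases h : p i = ⨆ j, p j
    · refine Eventually.of_forall fun t => ?_
      have := le_ciSup (f := fun i : {i : ι // p i = ⨆ j, p j} => q i.1)
        (Set.finite_range _).bddAbove ⟨i, h⟩
      simp only at this
      rw [h]
      linarith
    · have h1 : p i < ⨆ j, p j :=
        lt_of_le_of_ne (le_ciSup (Set.finite_range _).bddAbove i) h
      generalize (⨆ i : {i : ι // p i = ⨆ j, p j}, q i.1) = S
      generalize (⨆ j, p j) = M at h1
      filter_upwards [eventually_ge_atTop ((q i - S) / (M - p i))] with t ht
      rw [div_le_iff₀ (by linarith)] at ht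
      linarith
  filter_upwards [key] with t ht
  refine le_antisymm (ciSup_le ht) ?_
  have := le_ciSup (f := fun i => t * p i + q i) (Set.finite_range _).bddAbove i1.1
  rw [← hi1]
  rwa [i1.2] at this

theorem aux_inf {ι : Type} [Finite ι] [Nonempty ι] (p q : ι → ℝ) :
    ∀ᶠ t : ℝ in atTop, (⨅ i, (t * p i + q i)) =
      t * (⨅ i, p i) + ⨅ i : {i : ι // p i = ⨅ j, p j}, q i.1 := by
  obtain ⟨i0, hi0⟩ := exists_eq_ciInf_of_finite (f := p)
  have : Nonempty {i : ι // p i = ⨅ j, p j} := ⟨⟨i0, hi0⟩⟩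
  obtain ⟨i1, hi1⟩ := exists_eq_ciInf_of_finite
    (f := fun i : {i : ι // p i = ⨅ j, p j} => q i.1)
  have key : ∀ᶠ t : ℝ in atTop, ∀ i,
      t * (⨅ i, p i) + (⨅ i : {i : ι // p i = ⨅ j, p j}, q i.1) ≤ t * p i + q i := by
    rw [eventually_all]
    intro i
    by_cases h : p i = ⨅ j, p j
    · refine Eventually.of_forall fun t => ?_
      have := ciInf_le (f := fun i : {i : ι // p i = ⨅ j, p j} => q i.1)
        (Set.finite_range _).bddBelow ⟨i, h⟩
      simp only at this
      rw [h]
      linarith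
    · have h1 : (⨅ j, p j) < p i :=
        lt_of_le_of_ne (ciInf_le (Set.finite_range _).bddBelow i) (Ne.symm h)
      generalize (⨅ i : {i : ι // p i = ⨅ j, p j}, q i.1) = S
      generalize (⨅ j, p j) = M at h1
      filter_upwards [eventually_ge_atTop ((S - q i) / (p i - M))] with t ht
      rw [div_le_iff₀ (by linarith)] at ht
      linarith
  filter_upwards [key] with t ht
  refine le_antisymm ?_ (le_ciInf ht)
  have := ciInf_le (f := fun i => t * p i + q i) (Set.finite_range _).bddBelow i1.1
  rw [← hi1]
  rwa [i1.2] at this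

/-- Let `f` be the Shapley operator of a zero-sum two-player stochastic
game with finite state space `{1,…,n}`, finite nonempty action sets `A i`, `B i`,
probability transition vectors `P i a b` and rewards `r i a b`.  Then for all `η, v ∈ ℝⁿ`
there exists `T ∈ ℝ` such that for every `t ≥ T`,
`f (t·η + v) = t·f̂(η) + f_η(v)`, where `f̂` is the recession function of `f` and `f_η` is
the tangent of `f` at infinity around the slope `η`. -/
theorem shapley_eventually_affine
    (n : ℕ) (A B : Fin n → Type) [∀ i, Fintype (A i)] [∀ i, Nonempty (A i)]
    [∀ i, Fintype (B i)] [∀ i, Nonempty (B i)]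
    (P : ∀ i : Fin n, A i → B i → Fin n → ℝ) (r : ∀ i : Fin n, A i → B i → ℝ)
    (hP0 : ∀ i a b j, 0 ≤ P i a b j) (hP1 : ∀ i a b, ∑ j, P i a b j = 1)
    (f fhat : (Fin n → ℝ) → (Fin n → ℝ))
    (ftan : (Fin n → ℝ) → (Fin n → ℝ) → (Fin n → ℝ))
    -- the Shapley operator
    (hf : ∀ v i, f v i = ⨅ a : A i, ⨆ b : B i, (∑ j, P i a b j * v j + r i a b))
    -- its recession function
    (hfhat : ∀ η i, fhat η i = ⨅ a : A i, ⨆ b : B i, ∑ j, P i a b j * η j)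
    -- its tangent at infinity around the slope η, with actions restricted to the
    -- argmin set Â_i(η) and argmax sets B̂_i(a,η)
    (hftan : ∀ η v i, ftan η v i =
      ⨅ a : {a : A i // (⨆ b : B i, ∑ j, P i a b j * η j) = fhat η i},
      ⨆ b : {b : B i // (∑ j, P i a.1 b j * η j) = ⨆ b' : B i, ∑ j, P i a.1 b' j * η j},
      (∑ j, P i a.1 b.1 j * v j + r i a.1 b.1)) :
    ∀ η v : Fin n → ℝ, ∃ T : ℝ, ∀ t ≥ T,
      f (fun j => t * η j + v j) = fun i => t * fhat η i + ftan η v i := by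
  intro η v
  rw [← eventually_atTop]
  have h1 : ∀ᶠ t : ℝ in atTop, ∀ i, ∀ a : A i, _ :=
    eventually_all.2 fun i => eventually_all.2 fun a =>
      aux_sup (fun b => ∑ j, P i a b j * η j) (fun b => ∑ j, P i a b j * v j + r i a b)
  have h2 : ∀ᶠ t : ℝ in atTop, ∀ i, _ := eventually_all.2 fun i =>
    aux_inf (fun a : A i => ⨆ b, ∑ j, P i a b j * η j)
      (fun a => ⨆ b : {b : B i // (∑ j, P i a b j * η j) = ⨆ b' : B i, ∑ j, P i a b' j * η j},
        (∑ j, P i a b.1 j * v j + r i a b.1))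
  filter_upwards [h1, h2] with t h1 h2
  funext i
  rw [hf, hftan, hfhat]
  refine Eq.trans ?_ (h2 i)
  refine iInf_congr fun a => ?_
  rw [← h1 i a]
  refine iSup_congr fun b => ?_
  rw [Finset.mul_sum, ← add_assoc, ← Finset.sum_add_distrib]
  congr 1
  exact Finset.sum_congr rfl fun j _ => by ring
end

section
/- Let f be the Shapley operator of a zero-sum two-player stochastic game with finite state space {1,…,n} and finite action sets. For η, v ∈ ℝⁿ, the half-line t ↦ tη + v is invariant under f, i.e. f(tη + v) = (t+1)η + v for all sufficiently large t, if and only if η = f̂(η) and η + v = f_η(v), where f̂ is the recession function of f and f_η is the tangent of f at infinity around the slope η. -/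
open Filter Topology

theorem eventually_iSup_affine {B : Type} [Fintype B] [Nonempty B] (c d : B → ℝ) :
    ∀ᶠ t : ℝ in atTop, (⨆ b, (t * c b + d b)) =
      t * (⨆ b, c b) + ⨆ b : {b : B // c b = ⨆ b', c b'}, d b.1 := by
  obtain ⟨b0, hb0⟩ := exists_eq_ciSup_of_finite (f := c)
  have : Nonempty {b : B // c b = ⨆ b', c b'} := ⟨⟨b0, hb0⟩⟩
  obtain ⟨b1, hb1⟩ := exists_eq_ciSup_of_finite
    (f := fun b : {b : B // c b = ⨆ b', c b'} => d b.1)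
  have hle : ∀ b : {b : B // c b = ⨆ b', c b'},
      d b.1 ≤ ⨆ b : {b : B // c b = ⨆ b', c b'}, d b.1 :=
    fun b => le_ciSup (f := fun b : {b : B // c b = ⨆ b', c b'} => d b.1)
      (Set.finite_range _).bddAbove b
  have hM : ∀ b, c b ≤ ⨆ b', c b' := fun b => le_ciSup (Set.finite_range c).bddAbove b
  have hc1 := b1.2
  generalize (⨆ b : {b : B // c b = ⨆ b', c b'}, d b.1) = N at *
  generalize (⨆ b', c b') = M at *
  have key : ∀ᶠ t : ℝ in atTop, ∀ b, t * c b + d b ≤ t * M + N := by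
    rw [eventually_all]
    intro b
    by_cases h : c b = M
    · filter_upwards with t
      have := hle ⟨b, h⟩
      rw [h]; linarith
    · have hpos : 0 < M - c b := sub_pos.2 (lt_of_le_of_ne (hM b) h)
      filter_upwards [eventually_ge_atTop ((d b - N) / (M - c b))] with t ht
      rw [div_le_iff₀ hpos] at ht
      linarith
  filter_upwards [key] with t ht
  apply le_antisymm (ciSup_le ht)
  have := le_ciSup (f := fun b => t * c b + d b) (Set.finite_range _).bddAbove b1.1
  rw [hc1, hb1] at this
  exact this

theorem eventually_iInf_affine {B : Type} [Fintype B] [Nonempty B] (c d : B → ℝ) :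
    ∀ᶠ t : ℝ in atTop, (⨅ b, (t * c b + d b)) =
      t * (⨅ b, c b) + ⨅ b : {b : B // c b = ⨅ b', c b'}, d b.1 := by
  obtain ⟨b0, hb0⟩ := exists_eq_ciInf_of_finite (f := c)
  have : Nonempty {b : B // c b = ⨅ b', c b'} := ⟨⟨b0, hb0⟩⟩
  obtain ⟨b1, hb1⟩ := exists_eq_ciInf_of_finite
    (f := fun b : {b : B // c b = ⨅ b', c b'} => d b.1)
  have hle : ∀ b : {b : B // c b = ⨅ b', c b'},
      (⨅ b : {b : B // c b = ⨅ b', c b'}, d b.1) ≤ d b.1 :=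
    fun b => ciInf_le (f := fun b : {b : B // c b = ⨅ b', c b'} => d b.1)
      (Set.finite_range _).bddBelow b
  have hM : ∀ b, (⨅ b', c b') ≤ c b := fun b => ciInf_le (Set.finite_range c).bddBelow b
  have hc1 := b1.2
  generalize (⨅ b : {b : B // c b = ⨅ b', c b'}, d b.1) = N at *
  generalize (⨅ b', c b') = M at *
  have key : ∀ᶠ t : ℝ in atTop, ∀ b, t * M + N ≤ t * c b + d b := by
    rw [eventually_all]
    intro b
    by_cases h : c b = M
    · filter_upwards with t
      have := hle ⟨b, h⟩
      rw [h]; linarith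
    · have hpos : 0 < c b - M := sub_pos.2 (lt_of_le_of_ne (hM b) (Ne.symm h))
      filter_upwards [eventually_ge_atTop ((N - d b) / (c b - M))] with t ht
      rw [div_le_iff₀ hpos] at ht
      linarith
  filter_upwards [key] with t ht
  refine le_antisymm ?_ (le_ciInf ht)
  have := ciInf_le (f := fun b => t * c b + d b) (Set.finite_range _).bddBelow b1.1
  rw [hc1, hb1] at this
  exact this

/-- Let `f` be the Shapley operator of a zero-sum two-player stochastic
game with finite state space `{1,…,n}` and finite nonempty action sets.  For `η, v ∈ ℝⁿ`,
the half-line `t ↦ tη + v` is invariant under `f` (i.e. `f(tη + v) = (t+1)η + v` for all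
sufficiently large `t`) if and only if `η = f̂(η)` and `η + v = f_η(v)`, where `f̂` is the
recession function of `f` and `f_η` is the tangent of `f` at infinity around the slope `η`. -/
theorem invariant_halfLine_iff_system
    (n : ℕ) (A B : Fin n → Type) [∀ i, Fintype (A i)] [∀ i, Nonempty (A i)]
    [∀ i, Fintype (B i)] [∀ i, Nonempty (B i)]
    (P : ∀ i : Fin n, A i → B i → Fin n → ℝ) (r : ∀ i : Fin n, A i → B i → ℝ)
    (hP0 : ∀ i a b j, 0 ≤ P i a b j) (hP1 : ∀ i a b, ∑ j, P i a b j = 1)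
    (f fhat : (Fin n → ℝ) → (Fin n → ℝ))
    (ftan : (Fin n → ℝ) → (Fin n → ℝ) → (Fin n → ℝ))
    -- the Shapley operator
    (hf : ∀ v i, f v i = ⨅ a : A i, ⨆ b : B i, (∑ j, P i a b j * v j + r i a b))
    -- its recession function
    (hfhat : ∀ η i, fhat η i = ⨅ a : A i, ⨆ b : B i, ∑ j, P i a b j * η j)
    -- its tangent at infinity around the slope η, with actions restricted to the
    -- argmin set Â_i(η) and argmax sets B̂_i(a,η)
    (hftan : ∀ η v i, ftan η v i =
      ⨅ a : {a : A i // (⨆ b : B i, ∑ j, P i a b j * η j) = fhat η i},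
      ⨆ b : {b : B i // (∑ j, P i a.1 b j * η j) = ⨆ b' : B i, ∑ j, P i a.1 b' j * η j},
      (∑ j, P i a.1 b.1 j * v j + r i a.1 b.1))
    (η v : Fin n → ℝ) :
    (∃ T : ℝ, ∀ t ≥ T,
        f (fun j => t * η j + v j) = fun i => (t + 1) * η i + v i) ↔
      (fhat η = η ∧ ftan η v = fun i => η i + v i) := by
  have key : ∀ᶠ t : ℝ in atTop, ∀ i,
      f (fun j => t * η j + v j) i = t * fhat η i + ftan η v i := by
    rw [eventually_all]
    intro i
    have h1 : ∀ᶠ t : ℝ in atTop, ∀ a : A i, _ := eventually_all.2 fun a =>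
      eventually_iSup_affine (fun b : B i => ∑ j, P i a b j * η j)
        (fun b => ∑ j, P i a b j * v j + r i a b)
    have h2 := eventually_iInf_affine (fun a : A i => ⨆ b : B i, ∑ j, P i a b j * η j)
      (fun a => ⨆ b : {b : B i // (∑ j, P i a b j * η j) = ⨆ b' : B i, ∑ j, P i a b' j * η j},
        (∑ j, P i a b.1 j * v j + r i a b.1))
    filter_upwards [h1, h2] with t h1 h2
    rw [hf, hftan, hfhat, ← h2]
    refine iInf_congr fun a => ?_
    rw [← h1 a]
    refine iSup_congr fun b => ?_
    rw [Finset.mul_sum, ← add_assoc, ← Finset.sum_add_distrib]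
    congr 1
    exact Finset.sum_congr rfl fun j _ => by ring
  constructor
  · rintro ⟨T, hT⟩
    obtain ⟨S, hS⟩ := eventually_atTop.1 key
    have h : ∀ i, fhat η i = η i ∧ ftan η v i = η i + v i := by
      intro i
      have a1 := hS (max S T) (le_max_left _ _) i
      have a2 := hS (max S T + 1) (by linarith [le_max_left S T]) i
      rw [hT _ (le_max_right _ _)] at a1
      rw [hT _ (by linarith [le_max_right S T])] at a2
      simp only at a1 a2
      have e : fhat η i = η i := by linarith
      rw [e] at a1
      exact ⟨e, by linarith⟩
    exact ⟨funext fun i => (h i).1, funext fun i => (h i).2⟩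
  · rintro ⟨h1, h2⟩
    obtain ⟨S, hS⟩ := eventually_atTop.1 key
    refine ⟨S, fun t ht => funext fun i => ?_⟩
    rw [hS t ht i, h1, h2]
    ring
end

section
/- Let f : ℝⁿ → ℝⁿ be nonexpansive in the sup-norm and suppose there exist η, v ∈ ℝⁿ and t₀ ∈ ℝ such that f(tη + v) = (t+1)η + v for all t ≥ t₀. Then for every y ∈ ℝⁿ the limit lim_{k→∞} f^k(y)/k exists and equals η, where f^k denotes the k-th iterate of f; in other words, the cycle time χ(f) exists and equals the slope of any invariant half-line of f. -/
open Filter Topology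

/-- Let `f : ℝⁿ → ℝⁿ` be nonexpansive in the sup-norm (the distance on
`Fin n → ℝ` is the sup-distance) and suppose there exist `η, v ∈ ℝⁿ` and `t₀ ∈ ℝ` such
that `f(tη + v) = (t+1)η + v` for all `t ≥ t₀`.  Then for every `y ∈ ℝⁿ` the limit
`lim_{k→∞} f^k(y)/k` exists and equals `η`: the cycle time `χ(f)` exists and equals the
slope of the invariant half-line. -/
theorem cycleTime_eq_slope_of_invariant_halfLine
    (n : ℕ) (f : (Fin n → ℝ) → (Fin n → ℝ))
    (hne : ∀ x y : Fin n → ℝ, dist (f x) (f y) ≤ dist x y)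
    (η v : Fin n → ℝ) (t₀ : ℝ)
    (hinv : ∀ t ≥ t₀, f (fun i => t * η i + v i) = fun i => (t + 1) * η i + v i) :
    ∀ y : Fin n → ℝ,
      Tendsto (fun k : ℕ => fun i => f^[k] y i / k) atTop (𝓝 η) := by
  intro y
  have hit : ∀ k : ℕ, f^[k] (fun i => t₀ * η i + v i) = fun i => (t₀ + k) * η i + v i := by
    intro k
    induction k with
    | zero => simp
    | succ k ih =>
      rw [Function.iterate_succ_apply', ih, hinv (t₀ + k) (by simp)]
      funext i
      push_cast
      ring
  have hd : ∀ k : ℕ, dist (f^[k] y) (f^[k] (fun i => t₀ * η i + v i))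
      ≤ dist y (fun i => t₀ * η i + v i) := by
    intro k
    induction k with
    | zero => simp
    | succ k ih =>
      rw [Function.iterate_succ_apply', Function.iterate_succ_apply']
      exact (hne _ _).trans ih
  rw [tendsto_pi_nhds]
  intro i
  set C := dist y (fun i => t₀ * η i + v i) with hC
  have hb : ∀ k : ℕ, |f^[k] y i - ((t₀ + k) * η i + v i)| ≤ C := by
    intro k
    have h1 := dist_le_pi_dist (f^[k] y) (f^[k] (fun i => t₀ * η i + v i)) i
    have h2 := h1.trans (hd k)
    rw [hit k, Real.dist_eq] at h2
    exact h2
  rw [tendsto_iff_dist_tendsto_zero]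
  have hlim : Tendsto (fun k : ℕ => (C + |t₀ * η i + v i|) / (k : ℝ)) atTop (𝓝 0) :=
    tendsto_const_div_atTop_nhds_zero_nat _
  refine squeeze_zero' (Eventually.of_forall fun k => dist_nonneg) ?_ hlim
  filter_upwards [eventually_gt_atTop 0] with k hk
  have hk' : (0 : ℝ) < k := by exact_mod_cast hk
  have e : f^[k] y i / k - η i
      = ((f^[k] y i - ((t₀ + k) * η i + v i)) + (t₀ * η i + v i)) / k := by
    field_simp
    ring
  rw [Real.dist_eq, e, abs_div, abs_of_pos hk']
  gcongr
  exact (abs_add_le _ _).trans (by gcongr; exact hb k)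
end

section
/- Let g : ℝⁿ → ℝⁿ be convex, order-preserving and additively homogeneous, let u ∈ ℝⁿ be harmonic with respect to g, let C be the set of critical nodes of g and N = {1,…,n} ∖ C. Then the map h : ℝ^N → ℝ^N defined by h(y) = r_N(g(ι_N(y, u_C))) has a unique fixed point (and u_N is that fixed point). -/
open Filter Topology

/-- The subdifferential of a (convex) self-map `g` of `ℝⁿ` at `u`: the set of matrices `M`
such that `g(x) − g(u) ≥ M(x − u)` componentwise for all `x`. -/
def Subdiff {n : ℕ} (g : (Fin n → ℝ) → (Fin n → ℝ)) (u : Fin n → ℝ) :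
    Set (Matrix (Fin n) (Fin n) ℝ) :=
  {M | ∀ (x : Fin n → ℝ) (i : Fin n), g u i + M.mulVec (x - u) i ≤ g x i}

/-- `F` is a recurrence class of the matrix `M`: a (strongly connected, arc-closed)
strongly connected component of the digraph with an arc `(i,j)` whenever `M i j > 0`,
such that every row of the `F×F` submatrix of `M` sums to `1`. -/
def IsRecClass {n : ℕ} (M : Matrix (Fin n) (Fin n) ℝ) (F : Finset (Fin n)) : Prop :=
  F.Nonempty ∧
  (∀ i ∈ F, ∀ j ∈ F, Relation.ReflTransGen (fun a b => 0 < M a b) i j) ∧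
  (∀ i ∈ F, ∀ j, 0 < M i j → j ∈ F) ∧
  (∀ i ∈ F, ∑ j ∈ F, M i j = 1)

/-- `i` is a critical node of `g`: `i` belongs to a recurrence class of some matrix in the
subdifferential of `g` at some harmonic vector of `g` (this does not depend on the choice
of the harmonic vector). -/
def IsCritical {n : ℕ} (g : (Fin n → ℝ) → (Fin n → ℝ)) (i : Fin n) : Prop :=
  ∃ u₀ : Fin n → ℝ, g u₀ = u₀ ∧
    ∃ M ∈ Subdiff g u₀, ∃ F : Finset (Fin n), IsRecClass M F ∧ i ∈ F

open Classical in
/-- `ι_N(y, u_C)`: the vector of `ℝⁿ` equal to `y` on the complement `N` of the set of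
critical nodes of `g`, and to `u` on the critical nodes. -/
noncomputable def combineCrit {n : ℕ} (g : (Fin n → ℝ) → (Fin n → ℝ)) (u : Fin n → ℝ)
    (y : {i : Fin n // ¬ IsCritical g i} → ℝ) : Fin n → ℝ :=
  fun j => if hj : IsCritical g j then u j else y ⟨j, hj⟩

theorem exists_subgradient {n : ℕ} (φ : (Fin n → ℝ) → ℝ) (hφ : ConvexOn ℝ Set.univ φ)
    (u : Fin n → ℝ) : ∃ m : Fin n → ℝ, ∀ x, φ u + ∑ j, m j * (x j - u j) ≤ φ x := by
  have hc : Continuous φ := by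
    rw [← continuousOn_univ]
    exact hφ.continuousOn isOpen_univ
  have hopen : IsOpen {p : (Fin n → ℝ) × ℝ | p.1 ∈ Set.univ ∧ φ p.1 < p.2} := by
    have : {p : (Fin n → ℝ) × ℝ | p.1 ∈ Set.univ ∧ φ p.1 < p.2} = {p | φ p.1 < p.2} := by
      ext p; simp
    rw [this]
    exact isOpen_lt (hc.comp continuous_fst) continuous_snd
  obtain ⟨f, hf⟩ := geometric_hahn_banach_point_open (x := (u, φ u))
    hφ.convex_strict_epigraph hopen (by simp)
  have hdec : ∀ (x : Fin n → ℝ) (t : ℝ), f (x, t) = (∑ j, x j * f (Pi.single j 1, 0)) + t * f (0, 1) := by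
    intro x t
    have h1 : ((x, t) : (Fin n → ℝ) × ℝ) = (x, 0) + t • ((0 : Fin n → ℝ), (1 : ℝ)) := by simp
    have h2 : f (x, 0) = ∑ j, x j * f (Pi.single j 1, 0) := by
      have := LinearMap.pi_apply_eq_sum_univ
        ((f : (Fin n → ℝ) × ℝ →ₗ[ℝ] ℝ).comp (LinearMap.inl ℝ (Fin n → ℝ) ℝ)) x
      simp only [LinearMap.comp_apply, LinearMap.inl_apply, ContinuousLinearMap.coe_coe,
        smul_eq_mul] at this
      rw [this]
      refine Finset.sum_congr rfl fun j _ => ?_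
      congr 3
      ext k
      simp [Pi.single_apply, eq_comm]
    rw [h1, map_add, map_smul, h2, smul_eq_mul]
  set c := f (0, 1) with hcdef
  have hcpos : 0 < c := by
    have := hf (u, φ u + 1) (by simp)
    rw [hdec, hdec] at this
    linarith
  refine ⟨fun j => -(f (Pi.single j 1, 0)) / c, fun x => ?_⟩
  have key : f (u, φ u) ≤ f (x, φ x) := by
    refine le_of_forall_pos_lt_add fun ε hε => ?_
    have := hf (x, φ x + ε / c) (by simp; positivity)
    rw [hdec x] at this ⊢
    have h3 : ε / c * c = ε := by field_simp
    linarith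
  rw [hdec, hdec] at key
  have h4 : c * ∑ j, -(f (Pi.single j 1, 0)) / c * (x j - u j)
      = (∑ j, u j * f (Pi.single j 1, 0)) - ∑ j, x j * f (Pi.single j 1, 0) := by
    rw [Finset.mul_sum, ← Finset.sum_sub_distrib]
    refine Finset.sum_congr rfl fun j _ => ?_
    field_simp
    ring
  have : c * (φ u + ∑ j, -(f (Pi.single j 1, 0)) / c * (x j - u j)) ≤ c * φ x := by
    rw [mul_add, h4]; linarith
  exact le_of_mul_le_mul_left this hcpos

theorem subdiff_nonempty {n : ℕ} (g : (Fin n → ℝ) → (Fin n → ℝ))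
    (hconv : ∀ i, ConvexOn ℝ Set.univ (fun x => g x i)) (u : Fin n → ℝ) :
    ∃ M, M ∈ Subdiff g u := by
  choose m hm using fun i => exists_subgradient _ (hconv i) u
  exact ⟨m, fun x i => by simpa [Matrix.mulVec, dotProduct] using hm i x⟩

theorem subdiff_nonneg {n : ℕ} {g : (Fin n → ℝ) → (Fin n → ℝ)}
    (hop : ∀ x y : Fin n → ℝ, x ≤ y → g x ≤ g y) {u : Fin n → ℝ}
    {M : Matrix (Fin n) (Fin n) ℝ} (hM : M ∈ Subdiff g u) (i j : Fin n) : 0 ≤ M i j := by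
  have h1 := hM (u - Pi.single j 1) i
  have h2 := hop (u - Pi.single j 1) u (by simp) i
  have h3 : u - Pi.single j 1 - u = -Pi.single j 1 := by abel
  rw [h3, Matrix.mulVec_neg, Matrix.mulVec_single_one] at h1
  simp at h1
  linarith

theorem subdiff_rowsum {n : ℕ} {g : (Fin n → ℝ) → (Fin n → ℝ)}
    (hah : ∀ (lam : ℝ) (x : Fin n → ℝ), g (fun i => lam + x i) = fun i => lam + g x i)
    {u : Fin n → ℝ}
    {M : Matrix (Fin n) (Fin n) ℝ} (hM : M ∈ Subdiff g u) (i : Fin n) : ∑ j, M i j = 1 := by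
  have h1 := hM (fun i => 1 + u i) i
  have h2 := hM (fun i => -1 + u i) i
  rw [hah] at h1 h2
  simp [Matrix.mulVec, dotProduct] at h1 h2
  linarith

/-- A nonempty set closed under the arcs of `M ∈ ∂g(u)` contains a critical node. -/
theorem exists_critical_of_closed {n : ℕ} {g : (Fin n → ℝ) → (Fin n → ℝ)}
    (hop : ∀ x y : Fin n → ℝ, x ≤ y → g x ≤ g y)
    (hah : ∀ (lam : ℝ) (x : Fin n → ℝ), g (fun i => lam + x i) = fun i => lam + g x i)
    {u : Fin n → ℝ} (hu : g u = u)
    {M : Matrix (Fin n) (Fin n) ℝ} (hM : M ∈ Subdiff g u)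
    (S : Set (Fin n)) (hS : S.Nonempty) (hcl : ∀ i ∈ S, ∀ j, 0 < M i j → j ∈ S) :
    ∃ i ∈ S, IsCritical g i := by
  classical
  let r : Fin n → Fin n → Prop := Relation.ReflTransGen (fun a b => 0 < M a b)
  let R : Fin n → Finset (Fin n) := fun i => Finset.univ.filter (r i)
  obtain ⟨i, hiS, hmin⟩ := Set.exists_min_image S (fun i => (R i).card) S.toFinite hS
  have hRS : ∀ j, r i j → j ∈ S := by
    intro j hj
    induction hj with
    | refl => exact hiS
    | tail _ h ih => exact hcl _ ih _ h
  have hback : ∀ j, r i j → r j i := by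
    intro j hj
    have hsub : R j ⊆ R i := by
      intro k hk
      simp only [R, Finset.mem_filter, Finset.mem_univ, true_and] at hk ⊢
      exact hj.trans hk
    have heq := Finset.eq_of_subset_of_card_le hsub (hmin j (hRS j hj))
    have : i ∈ R j := by
      rw [heq]; simp only [R, Finset.mem_filter, Finset.mem_univ, true_and]
      exact Relation.ReflTransGen.refl
    simpa [R] using this
  have hiR : i ∈ R i := by
    simp only [R, Finset.mem_filter, Finset.mem_univ, true_and]
    exact Relation.ReflTransGen.refl
  have hRcl : ∀ a ∈ R i, ∀ j, 0 < M a j → j ∈ R i := by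
    intro a ha j hj
    simp only [R, Finset.mem_filter, Finset.mem_univ, true_and] at ha ⊢
    exact ha.tail hj
  refine ⟨i, hiS, u, hu, M, hM, R i, ⟨⟨i, hiR⟩, ?_, hRcl, ?_⟩, hiR⟩
  · intro a ha b hb
    simp only [R, Finset.mem_filter, Finset.mem_univ, true_and] at ha hb
    exact (hback a ha).trans hb
  · intro a ha
    rw [← subdiff_rowsum hah hM a]
    refine Finset.sum_subset (Finset.subset_univ _) fun j _ hj => ?_
    exact le_antisymm (not_lt.1 fun h => hj (hRcl a ha j h)) (subdiff_nonneg hop hM a j)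

/-- Maximum principle: if `w ≤ m` and `m ≤ ∑ pⱼ wⱼ` then `w = m` on the support of `p`. -/
theorem max_principle {n : ℕ} (p w : Fin n → ℝ) (m : ℝ) (hp : ∀ j, 0 ≤ p j)
    (hsum : ∑ j, p j = 1) (hw : ∀ j, w j ≤ m) (h : m ≤ ∑ j, p j * w j) :
    (∑ j, p j * w j = m) ∧ ∀ j, 0 < p j → w j = m := by
  have h0 : ∑ j, p j * (m - w j) = m - ∑ j, p j * w j := by
    simp_rw [mul_sub]
    rw [Finset.sum_sub_distrib, ← Finset.sum_mul, hsum, one_mul]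
  have hnn : ∀ j ∈ Finset.univ, 0 ≤ p j * (m - w j) :=
    fun j _ => mul_nonneg (hp j) (sub_nonneg.2 (hw j))
  have h1 : ∑ j, p j * (m - w j) = 0 :=
    le_antisymm (by linarith) (Finset.sum_nonneg hnn)
  refine ⟨by linarith, fun j hj => ?_⟩
  have := (Finset.sum_eq_zero_iff_of_nonneg hnn).1 h1 j (Finset.mem_univ j)
  rcases mul_eq_zero.1 this with h | h <;> linarith

theorem le_zero_of_sup {n : ℕ} {g : (Fin n → ℝ) → (Fin n → ℝ)}
    (hop : ∀ x y : Fin n → ℝ, x ≤ y → g x ≤ g y)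
    (hah : ∀ (lam : ℝ) (x : Fin n → ℝ), g (fun i => lam + x i) = fun i => lam + g x i)
    {u : Fin n → ℝ} (hu : g u = u) (w : Fin n → ℝ) (hwC : ∀ i, IsCritical g i → w i = 0)
    (Q : Matrix (Fin n) (Fin n) ℝ) (hQ0 : ∀ i j, 0 ≤ Q i j) (hQ1 : ∀ i, ∑ j, Q i j = 1)
    (hQ : ∀ i, ¬ IsCritical g i → w i ≤ ∑ j, Q i j * w j)
    (hM : ∀ S : Set (Fin n), (∀ i ∈ S, ¬ IsCritical g i ∧ ∑ j, Q i j * w j = w i) →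
      ∃ M ∈ Subdiff g u, ∀ i ∈ S, M i = Q i) : ∀ i, w i ≤ 0 := by
  intro i0
  by_contra! hpos
  have : Nonempty (Fin n) := ⟨i0⟩
  obtain ⟨k, hk⟩ := Finite.exists_max w
  have hmpos : 0 < w k := lt_of_lt_of_le hpos (hk i0)
  have hN : ∀ i, w i = w k → ¬ IsCritical g i := fun i hi hc => by
    have := hwC i hc
    linarith
  have hP : ∀ i, w i = w k → _ := fun i hi =>
    max_principle (Q i) w (w k) (hQ0 i) (hQ1 i) hk (hi ▸ hQ i (hN i hi))
  obtain ⟨M, hMs, hMQ⟩ := hM {i | w i = w k} fun i hi =>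
    ⟨hN i hi, by rw [(hP i hi).1]; exact hi.symm⟩
  obtain ⟨i, hi, hc⟩ := exists_critical_of_closed hop hah hu hMs {i | w i = w k} ⟨k, rfl⟩
    fun i hi j hj => (hP i hi).2 j (by rw [← hMQ i hi]; exact hj)
  exact hN i hi hc

/-- Let `g : ℝⁿ → ℝⁿ` be convex, order-preserving and additively
homogeneous, let `u` be harmonic with respect to `g`, let `C` be the set of critical
nodes of `g` and `N` its complement.  Then the map `h : ℝ^N → ℝ^N`,
`h(y) = r_N (g (ι_N(y, u_C)))`, has a unique fixed point, and `u_N` is that fixed point. -/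
theorem unique_fixedPoint_on_noncritical
    (n : ℕ) (g : (Fin n → ℝ) → (Fin n → ℝ))
    (hconv : ∀ i, ConvexOn ℝ Set.univ (fun x => g x i))
    (hop : ∀ x y : Fin n → ℝ, x ≤ y → g x ≤ g y)
    (hah : ∀ (lam : ℝ) (x : Fin n → ℝ), g (fun i => lam + x i) = fun i => lam + g x i)
    (u : Fin n → ℝ) (hu : g u = u) :
    ((fun i : {i : Fin n // ¬ IsCritical g i} =>
        g (combineCrit g u (fun i => u i.1)) i.1) = fun i => u i.1) ∧
    ∀ y : {i : Fin n // ¬ IsCritical g i} → ℝ,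
      (fun i : {i : Fin n // ¬ IsCritical g i} => g (combineCrit g u y) i.1) = y →
      y = fun i => u i.1 := by
  classical
  have hcu : combineCrit g u (fun i => u i.1) = u := by
    ext j
    simp [combineCrit]
  refine ⟨by rw [hcu, hu], fun y hy => ?_⟩
  set v := combineCrit g u y with hv
  have hvC : ∀ i, IsCritical g i → v i = u i := fun i hi => by simp [hv, combineCrit, hi]
  have hvy : ∀ i : {i : Fin n // ¬ IsCritical g i}, v i.1 = y i := fun i => by
    simp [hv, combineCrit, i.2]
  have hvN : ∀ i, ¬ IsCritical g i → g v i = v i := fun i hi => by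
    rw [hvy ⟨i, hi⟩]
    exact congrFun hy ⟨i, hi⟩
  obtain ⟨A, hA⟩ := subdiff_nonempty g hconv u
  obtain ⟨B, hB⟩ := subdiff_nonempty g hconv v
  have hlow : ∀ i, (u - v) i ≤ 0 := by
    refine le_zero_of_sup hop hah hu (u - v) (fun i hi => by simp [hvC i hi]) A
      (subdiff_nonneg hop hA) (subdiff_rowsum hah hA) (fun i hi => ?_)
      (fun S _ => ⟨A, hA, fun _ _ => rfl⟩)
    have h1 := hA v i
    rw [hvN i hi, hu, ← neg_sub u v, Matrix.mulVec_neg] at h1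
    have h2 : A.mulVec (u - v) i = ∑ j, A i j * (u - v) j := rfl
    rw [← h2]
    simp only [Pi.neg_apply, Pi.sub_apply] at h1 ⊢
    linarith
  have hup : ∀ i, (v - u) i ≤ 0 := by
    refine le_zero_of_sup hop hah hu (v - u) (fun i hi => by simp [hvC i hi]) B
      (subdiff_nonneg hop hB) (subdiff_rowsum hah hB) (fun i hi => ?_)
      (fun S hS => ⟨fun i => if i ∈ S then B i else A i, fun x i => ?_, fun i hi => ?_⟩)
    · have h1 := hB u i
      rw [hvN i hi, hu, ← neg_sub v u, Matrix.mulVec_neg] at h1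
      have h2 : B.mulVec (v - u) i = ∑ j, B i j * (v - u) j := rfl
      rw [← h2]
      simp only [Pi.neg_apply, Pi.sub_apply] at h1 ⊢
      linarith
    · by_cases hi : i ∈ S
      · obtain ⟨hiN, h2⟩ := hS i hi
        have h1 := hB x i
        have h3 : B.mulVec (v - u) i = (v - u) i := h2
        have h4 : x - u = (x - v) + (v - u) := by abel
        have h5 : Matrix.mulVec (fun i => if i ∈ S then B i else A i) (x - u) i
            = B.mulVec (x - u) i := by
          simp [Matrix.mulVec, hi]
        rw [h5, h4, Matrix.mulVec_add, Pi.add_apply, h3, hu]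
        rw [hvN i hiN] at h1
        simp only [Pi.sub_apply]
        linarith
      · have h1 := hA x i
        have h5 : Matrix.mulVec (fun i => if i ∈ S then B i else A i) (x - u) i
            = A.mulVec (x - u) i := by
          simp [Matrix.mulVec, hi]
        rw [h5]
        exact h1
    · simp [hi]
  ext i
  have h1 := hlow i.1
  have h2 := hup i.1
  simp only [Pi.sub_apply] at h1 h2
  rw [← hvy i]
  linarith
end

section
/- Let g : ℝⁿ → ℝⁿ be convex, order-preserving and additively homogeneous with at least one harmonic vector, and let C be its set of critical nodes. If u ∈ ℝⁿ is super-harmonic with respect to g, then g(u)_i = u_i for every i ∈ C, the limit g^ω(u) := lim_{k→∞} g^k(u) exists, g^ω(u) is harmonic with respect to g, and g^ω(u)_i = u_i for every i ∈ C. -/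
open Filter Topology

theorem aux_crit {n : ℕ} (g : (Fin n → ℝ) → (Fin n → ℝ))
    (hop : ∀ x y : Fin n → ℝ, x ≤ y → g x ≤ g y)
    (u : Fin n → ℝ) (hu : g u ≤ u) (i : Fin n) (hi : IsCritical g i) : g u i = u i := by
  obtain ⟨v, hv, M, hM, F, ⟨hne, hconn, hclosed, hsum⟩, hiF⟩ := hi
  have hnn : ∀ a b, 0 ≤ M a b := by
    intro a b
    have h1 := hM (v - Pi.single b 1) a
    have h2 := hop (v - Pi.single b 1) v (by
      intro k
      have : (0 : ℝ) ≤ (Pi.single b 1 : Fin n → ℝ) k := by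
        by_cases h : k = b
        · subst h; simp
        · simp [h]
      simp only [Pi.sub_apply]; linarith) a
    have h3 : v - Pi.single b 1 - v = -(Pi.single b 1 : Fin n → ℝ) := by abel
    rw [h3, Matrix.mulVec_neg] at h1
    simp at h1
    linarith
  have key : ∀ a ∈ F, M.mulVec (u - v) a = ∑ j ∈ F, M a j * (u - v) j := by
    intro a ha
    unfold Matrix.mulVec dotProduct
    symm
    apply Finset.sum_subset (Finset.subset_univ _)
    intro x _ hx
    have : M a x = 0 := le_antisymm (not_lt.1 fun h => hx (hclosed a ha x h)) (hnn a x)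
    simp [this]
  have hle : ∀ a ∈ F, ∑ j ∈ F, M a j * (u - v) j ≤ (u - v) a := by
    intro a ha
    have h1 := hM u a
    rw [key a ha, hv] at h1
    have := hu a
    simp only [Pi.sub_apply] at h1 ⊢
    linarith
  obtain ⟨m, hmF, hm⟩ := F.exists_min_image (u - v) hne
  have step : ∀ a ∈ F, (u - v) a = (u - v) m → ∀ b, 0 < M a b → (u - v) b = (u - v) m := by
    intro a ha hae b hab
    have hb := hclosed a ha b hab
    have h0 : ∑ j ∈ F, M a j * ((u - v) j - (u - v) m) ≤ 0 := by
      simp only [mul_sub, Finset.sum_sub_distrib, ← Finset.sum_mul, hsum a ha]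
      have := hle a ha
      linarith
    have hpos : ∀ j ∈ F, 0 ≤ M a j * ((u - v) j - (u - v) m) := fun j hj =>
      mul_nonneg (hnn a j) (sub_nonneg.2 (hm j hj))
    have h1 := (Finset.sum_eq_zero_iff_of_nonneg hpos).1
      (le_antisymm h0 (Finset.sum_nonneg hpos)) b hb
    rcases mul_eq_zero.1 h1 with h | h
    · exact absurd h hab.ne'
    · linarith
  have const : ∀ b ∈ F, (u - v) b = (u - v) m := by
    intro b hb
    have : b ∈ F ∧ (u - v) b = (u - v) m := by
      refine Relation.ReflTransGen.head_induction_on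
        (motive := fun c _ => (c ∈ F ∧ (u - v) c = (u - v) m) →
          (b ∈ F ∧ (u - v) b = (u - v) m)) (hconn m hmF b hb) (fun h => h) ?_ ⟨hmF, rfl⟩
      intro a c hac _ ih h
      exact ih ⟨hclosed a h.1 c hac, step a h.1 h.2 c hac⟩
    exact this.2
  apply le_antisymm (hu i)
  have h1 := hM u i
  rw [key i hiF, hv, Finset.sum_congr rfl (fun j hj => by rw [const j hj]),
    ← Finset.sum_mul, hsum i hiF, one_mul, ← const i hiF] at h1
  simp only [Pi.sub_apply] at h1
  linarith

/-- Let `g : ℝⁿ → ℝⁿ` be convex, order-preserving and additively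
homogeneous with at least one harmonic vector, and let `C` be its set of critical nodes.
If `u` is super-harmonic with respect to `g`, then `g(u)ᵢ = uᵢ` for every critical node
`i`, the limit `g^ω(u) = lim_{k→∞} g^k(u)` exists, is harmonic with respect to `g`, and
coincides with `u` on the critical nodes. -/
theorem superharmonic_iterates_converge
    (n : ℕ) (g : (Fin n → ℝ) → (Fin n → ℝ))
    (hconv : ∀ i, ConvexOn ℝ Set.univ (fun x => g x i))
    (hop : ∀ x y : Fin n → ℝ, x ≤ y → g x ≤ g y)
    (hah : ∀ (lam : ℝ) (x : Fin n → ℝ), g (fun i => lam + x i) = fun i => lam + g x i)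
    (u₀ : Fin n → ℝ) (hu₀ : g u₀ = u₀)
    (u : Fin n → ℝ) (hu : g u ≤ u) :
    (∀ i : Fin n, IsCritical g i → g u i = u i) ∧
    ∃ w : Fin n → ℝ, Tendsto (fun k : ℕ => g^[k] u) atTop (𝓝 w) ∧
      g w = w ∧ ∀ i : Fin n, IsCritical g i → w i = u i := by
  have hmono : Monotone g := fun x y h => hop x y h
  have hanti : Antitone (fun k : ℕ => g^[k] u) := hmono.antitone_iterate_of_map_le hu
  have hcont : Continuous g := continuous_pi fun i =>
    continuousOn_univ.1 ((hconv i).continuousOn isOpen_univ)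
  have hsup : ∀ k, g (g^[k] u) ≤ g^[k] u := by
    intro k
    have := hanti (Nat.le_succ k)
    simpa only [Function.iterate_succ_apply'] using this
  obtain ⟨c, hc⟩ : ∃ c : ℝ, ∀ i, c + u₀ i ≤ u i := by
    obtain ⟨c, hc⟩ := (Set.finite_range (fun i => u i - u₀ i)).bddBelow
    exact ⟨c, fun i => by have := hc ⟨i, rfl⟩; simp only at this; linarith⟩
  have hlow : ∀ k, (fun i => c + u₀ i) ≤ g^[k] u := by
    intro k
    induction k with
    | zero => exact hc
    | succ k ih =>
      rw [Function.iterate_succ_apply']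
      have := hop _ _ ih
      rwa [hah, hu₀] at this
  have hcritk : ∀ i, IsCritical g i → ∀ k, g^[k] u i = u i := by
    intro i hi k
    induction k with
    | zero => rfl
    | succ k ih =>
      rw [Function.iterate_succ_apply', aux_crit g hop _ (hsup k) i hi, ih]
  have htend : Tendsto (fun k : ℕ => g^[k] u) atTop (𝓝 (fun i => ⨅ k, g^[k] u i)) := by
    rw [tendsto_pi_nhds]
    intro i
    exact tendsto_atTop_ciInf (fun a b h => hanti h i)
      ⟨c + u₀ i, by rintro _ ⟨k, rfl⟩; exact hlow k i⟩
  refine ⟨fun i hi => aux_crit g hop u hu i hi, _, htend, ?_, ?_⟩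
  · exact isFixedPt_of_tendsto_iterate htend hcont.continuousAt
  · intro i hi
    simp [hcritk i hi]
end

section
/- Let g : ℝⁿ → ℝⁿ be convex, order-preserving and additively homogeneous with at least one harmonic vector, and define Q_g(u) := lim_{k→∞} g^k(u) for every super-harmonic vector u. Then Q_g maps the set of super-harmonic vectors into the set of harmonic vectors, Q_g(v) = v for every harmonic vector v (so Q_g is a projector onto the harmonic vectors), Q_g is order-preserving (u ≤ u' implies Q_g(u) ≤ Q_g(u')), Q_g is additively homogeneous (Q_g(λ𝟙 + u) = λ𝟙 + Q_g(u) for all λ ∈ ℝ), and every coordinate of Q_g is a convex function on the convex set of super-harmonic vectors. -/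
open Filter Topology

/-- Let `g : ℝⁿ → ℝⁿ` be convex, order-preserving and additively
homogeneous with at least one harmonic vector, and let `Q` satisfy
`Q(u) = lim_{k→∞} g^k(u)` for every super-harmonic `u` (`g(u) ≤ u`).  Then `Q` maps
super-harmonic vectors to harmonic vectors, fixes every harmonic vector (so it is a
projector onto the harmonic vectors), is order-preserving and additively homogeneous on
super-harmonic vectors, and every coordinate of `Q` is a convex function on the (convex)
set of super-harmonic vectors. -/
theorem spectral_projector_properties
    (n : ℕ) (g : (Fin n → ℝ) → (Fin n → ℝ))
    (hconv : ∀ i, ConvexOn ℝ Set.univ (fun x => g x i))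
    (hop : ∀ x y : Fin n → ℝ, x ≤ y → g x ≤ g y)
    (hah : ∀ (lam : ℝ) (x : Fin n → ℝ), g (fun i => lam + x i) = fun i => lam + g x i)
    (u₀ : Fin n → ℝ) (hu₀ : g u₀ = u₀)
    (Q : (Fin n → ℝ) → (Fin n → ℝ))
    (hQ : ∀ u : Fin n → ℝ, g u ≤ u → Tendsto (fun k : ℕ => g^[k] u) atTop (𝓝 (Q u))) :
    (∀ u : Fin n → ℝ, g u ≤ u → g (Q u) = Q u) ∧
    (∀ v : Fin n → ℝ, g v = v → Q v = v) ∧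
    (∀ u u' : Fin n → ℝ, g u ≤ u → g u' ≤ u' → u ≤ u' → Q u ≤ Q u') ∧
    (∀ (lam : ℝ) (u : Fin n → ℝ), g u ≤ u →
      Q (fun i => lam + u i) = fun i => lam + Q u i) ∧
    (∀ i : Fin n, ConvexOn ℝ {u : Fin n → ℝ | g u ≤ u} (fun u => Q u i)) := by
  have hcont : Continuous g := by
    have hL : LipschitzWith 1 g := by
      refine LipschitzWith.of_dist_le_mul fun x y => ?_
      have key : ∀ a b : Fin n → ℝ, ∀ i, g a i - g b i ≤ dist a b := by
        intro a b i
        have h1 : a ≤ fun j => dist a b + b j := by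
          intro j
          have h2 := dist_le_pi_dist a b j
          have h3 := le_abs_self (a j - b j)
          rw [Real.dist_eq] at h2
          show a j ≤ dist a b + b j
          linarith
        have h4 := hop _ _ h1 i
        rw [hah] at h4
        simp only at h4
        linarith
      rw [NNReal.coe_one, one_mul, dist_pi_le_iff dist_nonneg]
      intro i
      rw [Real.dist_eq, abs_le]
      have h1 := key x y i
      have h2 := key y x i
      rw [dist_comm] at h2
      constructor <;> linarith
    exact hL.continuous
  have hmono : ∀ k : ℕ, ∀ x y : Fin n → ℝ, x ≤ y → g^[k] x ≤ g^[k] y := by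
    intro k
    exact fun x y h => Monotone.iterate (f := g) (fun a b h => hop a b h) k h
  have hiter : ∀ (k : ℕ) (lam : ℝ) (x : Fin n → ℝ),
      g^[k] (fun i => lam + x i) = fun i => lam + g^[k] x i := by
    intro k lam x
    induction k with
    | zero => rfl
    | succ k ih => rw [Function.iterate_succ_apply', Function.iterate_succ_apply', ih, hah]
  have hvec : ∀ (x y : Fin n → ℝ) (a b : ℝ), 0 ≤ a → 0 ≤ b → a + b = 1 →
      g (a • x + b • y) ≤ a • g x + b • g y := by
    intro x y a b ha hb hab i
    exact (hconv i).2 (Set.mem_univ x) (Set.mem_univ y) ha hb hab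
  have hvk : ∀ (k : ℕ) (x y : Fin n → ℝ) (a b : ℝ), 0 ≤ a → 0 ≤ b → a + b = 1 →
      g^[k] (a • x + b • y) ≤ a • g^[k] x + b • g^[k] y := by
    intro k x y a b ha hb hab
    induction k with
    | zero => exact le_rfl
    | succ k ih =>
      simp only [Function.iterate_succ_apply']
      exact (hop _ _ ih).trans (hvec _ _ a b ha hb hab)
  have hset : Convex ℝ {u : Fin n → ℝ | g u ≤ u} := by
    intro x hx y hy a b ha hb hab
    have hx' : g x ≤ x := hx
    have hy' : g y ≤ y := hy
    exact (hvec x y a b ha hb hab).trans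
      (add_le_add (smul_le_smul_of_nonneg_left hx' ha) (smul_le_smul_of_nonneg_left hy' hb))
  refine ⟨?_, ?_, ?_, ?_, ?_⟩
  · intro u hu
    have h1 := (hcont.tendsto (Q u)).comp (hQ u hu)
    have h2 := (hQ u hu).comp (tendsto_add_atTop_nat 1)
    refine tendsto_nhds_unique h1 (h2.congr fun k => ?_)
    exact Function.iterate_succ_apply' g k u
  · intro v hv
    refine tendsto_nhds_unique (hQ v hv.le) (tendsto_const_nhds.congr fun k => ?_)
    exact (Function.iterate_fixed hv k).symm
  · intro u u' hu hu' h
    exact le_of_tendsto_of_tendsto' (hQ u hu) (hQ u' hu') fun k => hmono k _ _ h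
  · intro lam u hu
    have hs : g (fun i => lam + u i) ≤ fun i => lam + u i := by
      rw [hah]
      intro i
      have := hu i
      show lam + g u i ≤ lam + u i
      linarith
    have h1 := hQ _ hs
    simp only [hiter] at h1
    refine tendsto_nhds_unique h1 ?_
    rw [tendsto_pi_nhds]
    intro i
    exact ((tendsto_pi_nhds.1 (hQ u hu)) i).const_add lam
  · intro i
    refine ⟨hset, ?_⟩
    intro x hx y hy a b ha hb hab
    have h1 := hQ _ (hset hx hy ha hb hab)
    have h2 := ((hQ x hx).const_smul a).add ((hQ y hy).const_smul b)
    exact le_of_tendsto_of_tendsto' h1 h2 (fun k => hvk k x y a b ha hb hab) i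
end

section
/- Let g : ℝⁿ → ℝⁿ be convex, order-preserving and additively homogeneous with at least one harmonic vector, and let C be its set of critical nodes. For every super-harmonic vector u there exists a unique harmonic vector v such that v_i = u_i for all i ∈ C, and this v equals lim_{k→∞} g^k(u). -/
open Filter Topology

lemma aux_lip {n : ℕ} (g : (Fin n → ℝ) → (Fin n → ℝ))
    (hop : ∀ x y : Fin n → ℝ, x ≤ y → g x ≤ g y)
    (hah : ∀ (lam : ℝ) (x : Fin n → ℝ), g (fun i => lam + x i) = fun i => lam + g x i) :
    Continuous g := by
  have key : ∀ x y : Fin n → ℝ, ∀ i, g x i - g y i ≤ dist x y := by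
    intro x y i
    have h : x ≤ fun i => dist x y + y i := by
      intro j
      have := dist_le_pi_dist x y j
      rw [Real.dist_eq] at this
      have := le_abs_self (x j - y j)
      show x j ≤ dist x y + y j
      linarith
    have h2 := hop _ _ h i
    rw [hah] at h2
    dsimp only at h2
    linarith
  refine (LipschitzWith.of_dist_le_mul (K := 1) ?_).continuous
  intro x y
  rw [NNReal.coe_one, one_mul, dist_pi_le_iff dist_nonneg]
  intro i
  rw [Real.dist_eq, abs_le]
  have h1 := key x y i
  have h2 := key y x i
  rw [dist_comm] at h2
  constructor <;> linarith

lemma aux_subgrad {n : ℕ} (f : (Fin n → ℝ) → ℝ) (hf : ConvexOn ℝ Set.univ f)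
    (hc : Continuous f) (x₀ : Fin n → ℝ) :
    ∃ m : Fin n → ℝ, ∀ y, f x₀ + ∑ j, m j * (y - x₀) j ≤ f y := by
  have hopen : IsOpen {p : (Fin n → ℝ) × ℝ | p.1 ∈ Set.univ ∧ f p.1 < p.2} := by
    simp only [Set.mem_univ, true_and]
    exact isOpen_lt (hc.comp continuous_fst) continuous_snd
  obtain ⟨L, hL⟩ := geometric_hahn_banach_open_point hf.convex_strict_epigraph hopen
    (x := (x₀, f x₀)) (by simp)
  have hsplit : ∀ (y : Fin n → ℝ) (t : ℝ), L (y, t) = L (y, 0) + t * L (0, 1) := by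
    intro y t
    have : ((y, t) : (Fin n → ℝ) × ℝ) = (y, 0) + t • ((0, 1) : (Fin n → ℝ) × ℝ) := by
      ext <;> simp
    rw [this, map_add, map_smul, smul_eq_mul]
  have hb : L (0, 1) < 0 := by
    have := hL (x₀, f x₀ + 1) (by simp)
    rw [hsplit, hsplit x₀ (f x₀)] at this
    linarith
  set b := L (0, 1) with hbdef
  have hlin : ∀ y : Fin n → ℝ, L (y, 0) = ∑ j, y j * L (Pi.single j 1, 0) := by
    intro y
    have := LinearMap.pi_apply_eq_sum_univ
      ((L : (Fin n → ℝ) × ℝ →ₗ[ℝ] ℝ).comp (LinearMap.inl ℝ (Fin n → ℝ) ℝ)) y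
    simp only [smul_eq_mul, LinearMap.comp_apply, LinearMap.inl_apply] at this
    refine this.trans (Finset.sum_congr rfl fun j _ => ?_)
    have he : (fun k => if j = k then (1 : ℝ) else 0) = Pi.single j 1 := by
      ext k
      simp [Pi.single_apply, eq_comm]
    rw [he]
    rfl
  refine ⟨fun j => L (Pi.single j 1, 0) / (-b), fun y => ?_⟩
  have hs : ∑ j, L (Pi.single j 1, 0) / (-b) * (y - x₀) j = (L (y, 0) - L (x₀, 0)) / (-b) := by
    rw [hlin y, hlin x₀, ← Finset.sum_sub_distrib, Finset.sum_div]
    refine Finset.sum_congr rfl fun j _ => ?_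
    simp only [Pi.sub_apply]
    ring
  rw [hs]
  refine le_of_forall_pos_le_add fun ε hε => ?_
  have := hL (y, f y + ε) (by simp [hε])
  rw [hsplit, hsplit x₀ (f x₀)] at this
  have h3 : (L (y, 0) - L (x₀, 0)) / (-b) ≤ f y + ε - f x₀ := by
    rw [div_le_iff₀ (by linarith)]
    nlinarith
  linarith

lemma aux_exists {n : ℕ} (g : (Fin n → ℝ) → (Fin n → ℝ))
    (hconv : ∀ i, ConvexOn ℝ Set.univ (fun x => g x i)) (hc : Continuous g)
    (v : Fin n → ℝ) : ∃ M, M ∈ Subdiff g v := by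
  choose m hm using fun i => aux_subgrad (fun x => g x i) (hconv i)
    ((continuous_apply i).comp hc) v
  exact ⟨Matrix.of m, fun x i => hm i x⟩

lemma aux_nonneg {n : ℕ} (g : (Fin n → ℝ) → (Fin n → ℝ))
    (hop : ∀ x y : Fin n → ℝ, x ≤ y → g x ≤ g y) (v : Fin n → ℝ)
    (M : Matrix (Fin n) (Fin n) ℝ) (hM : M ∈ Subdiff g v) (i j : Fin n) : 0 ≤ M i j := by
  have h1 := hM (v - Pi.single j 1) i
  have h2 := hop (v - Pi.single j 1) v (by
    intro k
    by_cases hk : k = j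
    · subst hk; simp
    · simp [hk]) i
  have h3 : M.mulVec (v - Pi.single j 1 - v) i = - M i j := by
    have : v - Pi.single j 1 - v = - Pi.single j (1 : ℝ) := by abel
    rw [this, Matrix.mulVec_neg]
    simp
  linarith

lemma aux_rowsum {n : ℕ} (g : (Fin n → ℝ) → (Fin n → ℝ))
    (hah : ∀ (lam : ℝ) (x : Fin n → ℝ), g (fun i => lam + x i) = fun i => lam + g x i)
    (v : Fin n → ℝ)
    (M : Matrix (Fin n) (Fin n) ℝ) (hM : M ∈ Subdiff g v) (i : Fin n) : ∑ j, M i j = 1 := by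
  have key : ∀ c : ℝ, (∑ j, M i j) * c ≤ c := by
    intro c
    have h := hM (fun i => c + v i) i
    rw [hah] at h
    have h3 : M.mulVec ((fun i => c + v i) - v) i = (∑ j, M i j) * c := by
      simp [Matrix.mulVec, dotProduct, Finset.sum_mul]
    linarith
  have h1 := key 1
  have h2 := key (-1)
  linarith

lemma aux_reach {n : ℕ} (M : Matrix (Fin n) (Fin n) ℝ) (I : Set (Fin n)) (hI : I.Nonempty)
    (hcl : ∀ i ∈ I, ∀ j, 0 < M i j → j ∈ I) (h0 : ∀ i j, 0 ≤ M i j)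
    (h1 : ∀ i, ∑ j, M i j = 1) :
    ∃ F : Finset (Fin n), IsRecClass M F ∧ ∀ i ∈ F, i ∈ I := by
  classical
  let R : Fin n → Finset (Fin n) := fun i =>
    Finset.univ.filter (fun j => Relation.ReflTransGen (fun a b => 0 < M a b) i j)
  have hR : ∀ i j, j ∈ R i ↔ Relation.ReflTransGen (fun a b => 0 < M a b) i j := by
    intro i j; simp [R]
  obtain ⟨i, hi, hmin⟩ := Set.exists_min_image I (fun i => (R i).card) (Set.toFinite I) hI
  have hRI : ∀ j ∈ R i, j ∈ I := by
    intro j hj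
    rw [hR] at hj
    induction hj with
    | refl => exact hi
    | tail _ hbc ih => exact hcl _ ih _ hbc
  have hstep : ∀ j ∈ R i, ∀ k, 0 < M j k → k ∈ R i := by
    intro j hj k hk
    rw [hR] at hj ⊢
    exact hj.tail hk
  refine ⟨R i, ⟨⟨i, (hR i i).2 .refl⟩, ?_, hstep, ?_⟩, hRI⟩
  · intro j hj k hk
    have hsub : R j ⊆ R i := by
      intro l hl
      rw [hR] at hl ⊢
      exact ((hR _ _).1 hj).trans hl
    have heq := Finset.eq_of_subset_of_card_le hsub (hmin j (hRI j hj))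
    rw [← heq] at hk
    exact (hR _ _).1 hk
  · intro j hj
    rw [← h1 j]
    refine Finset.sum_subset (Finset.subset_univ _) fun k _ hk => ?_
    by_contra hne
    exact hk (hstep j hj k (lt_of_le_of_ne (h0 j k) (Ne.symm hne)))

/-- equality propagation along a row at an extremal value -/
lemma aux_row {n : ℕ} (m z : Fin n → ℝ) (h0 : ∀ j, 0 ≤ m j) (F : Finset (Fin n))
    (h1 : ∑ j ∈ F, m j = 1) (c : ℝ) (hle : ∀ j ∈ F, z j ≤ c) (hz : c ≤ ∑ j ∈ F, m j * z j) :
    ∀ j ∈ F, 0 < m j → z j = c := by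
  have hs : ∑ j ∈ F, m j * (c - z j) ≤ 0 := by
    simp only [mul_sub, Finset.sum_sub_distrib, ← Finset.sum_mul, h1]
    linarith
  have hnn : ∀ j ∈ F, 0 ≤ m j * (c - z j) := fun j hj =>
    mul_nonneg (h0 j) (sub_nonneg.2 (hle j hj))
  have hzero := (Finset.sum_eq_zero_iff_of_nonneg hnn).1 (le_antisymm hs (Finset.sum_nonneg hnn))
  intro j hj hm
  rcases mul_eq_zero.1 (hzero j hj) with h | h
  · exact absurd h hm.ne'
  · linarith

lemma aux_mulVec {n : ℕ} (M : Matrix (Fin n) (Fin n) ℝ) (F : Finset (Fin n))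
    (h0 : ∀ i j, 0 ≤ M i j) (hF : IsRecClass M F) (i : Fin n) (hi : i ∈ F) (z : Fin n → ℝ) :
    M.mulVec z i = ∑ j ∈ F, M i j * z j := by
  simp only [Matrix.mulVec, dotProduct]
  symm
  refine Finset.sum_subset (Finset.subset_univ _) fun k _ hk => ?_
  have : M i k = 0 := by
    by_contra hne
    exact hk (hF.2.2.1 i hi k (lt_of_le_of_ne (h0 i k) (Ne.symm hne)))
  simp [this]

/-- A super-harmonic vector differs from a harmonic one by a constant on a recurrence class. -/
lemma aux_const {n : ℕ} (g : (Fin n → ℝ) → (Fin n → ℝ))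
    (hop : ∀ x y : Fin n → ℝ, x ≤ y → g x ≤ g y)
    (w : Fin n → ℝ) (hw : g w = w) (M : Matrix (Fin n) (Fin n) ℝ) (hM : M ∈ Subdiff g w)
    (F : Finset (Fin n)) (hF : IsRecClass M F) (u : Fin n → ℝ) (hu : g u ≤ u) :
    ∃ c : ℝ, ∀ i ∈ F, u i = w i + c := by
  have h0 := aux_nonneg g hop w M hM
  obtain ⟨i, hi, hmin⟩ := F.exists_min_image (fun i => u i - w i) hF.1
  refine ⟨u i - w i, fun k hk => ?_⟩
  have hreach := hF.2.1 i hi k hk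
  have : k ∈ F ∧ u k - w k = u i - w i := by
    clear hk
    induction hreach with
    | refl => exact ⟨hi, rfl⟩
    | @tail b c _ hbc ih =>
      obtain ⟨hb, hbe⟩ := ih
      have hc := hF.2.2.1 b hb c hbc
      refine ⟨hc, ?_⟩
      have h2 := hM u b
      rw [hw, aux_mulVec M F h0 hF b hb] at h2
      have h3 := hu b
      have h4 := aux_row (M b) (fun j => -(u j - w j)) (h0 b) F (hF.2.2.2 b hb) (-(u i - w i))
        (fun j hj => neg_le_neg (hmin j hj)) (by
          simp only [mul_neg, Finset.sum_neg_distrib]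
          simp only [Pi.sub_apply] at h2
          linarith) c hc hbc
      linarith
  linarith [this.2]

lemma aux_fix {n : ℕ} (g : (Fin n → ℝ) → (Fin n → ℝ))
    (hop : ∀ x y : Fin n → ℝ, x ≤ y → g x ≤ g y) (u : Fin n → ℝ) (hu : g u ≤ u)
    (i : Fin n) (hi : IsCritical g i) (k : ℕ) : u i ≤ g^[k] u i := by
  obtain ⟨w, hw, M, hM, F, hF, hiF⟩ := hi
  obtain ⟨c, hc⟩ := aux_const g hop w hw M hM F hF u hu
  have h0 := aux_nonneg g hop w M hM
  have : ∀ k, ∀ j ∈ F, u j ≤ g^[k] u j := by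
    intro k
    induction k with
    | zero => intro j _; exact le_rfl
    | succ k ih =>
      intro j hj
      rw [Function.iterate_succ_apply']
      have h2 := hM (g^[k] u) j
      rw [hw, aux_mulVec M F h0 hF j hj] at h2
      have h3 : ∑ l ∈ F, M j l * c ≤ ∑ l ∈ F, M j l * (g^[k] u - w) l := by
        refine Finset.sum_le_sum fun l hl => mul_le_mul_of_nonneg_left ?_ (h0 j l)
        have := ih l hl
        have := hc l hl
        simp only [Pi.sub_apply]
        linarith
      rw [← Finset.sum_mul, hF.2.2.2 j hj, one_mul] at h3
      have := hc j hj
      linarith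
  exact this k i hiF

lemma aux_unique {n : ℕ} (g : (Fin n → ℝ) → (Fin n → ℝ))
    (hconv : ∀ i, ConvexOn ℝ Set.univ (fun x => g x i))
    (hop : ∀ x y : Fin n → ℝ, x ≤ y → g x ≤ g y)
    (hah : ∀ (lam : ℝ) (x : Fin n → ℝ), g (fun i => lam + x i) = fun i => lam + g x i)
    (v w : Fin n → ℝ) (hv : g v = v) (hw : g w = w)
    (heq : ∀ i, IsCritical g i → w i ≤ v i) : w ≤ v := by
  obtain ⟨M, hM⟩ := aux_exists g hconv (aux_lip g hop hah) w
  have h0 := aux_nonneg g hop w M hM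
  have h1 := aux_rowsum g hah w M hM
  by_contra hne
  rw [Pi.le_def] at hne
  push Not at hne
  obtain ⟨i₀, hi₀⟩ := hne
  obtain ⟨i, -, hmax⟩ := Finset.univ.exists_max_image (fun i => w i - v i) ⟨i₀, Finset.mem_univ _⟩
  obtain ⟨F, hF, hFI⟩ := aux_reach M {j | w j - v j = w i - v i} ⟨i, rfl⟩ (by
    intro j hj k hk
    have h2 := hM v j
    rw [hw, hv] at h2
    simp only [Matrix.mulVec, dotProduct, Pi.sub_apply] at h2
    refine aux_row (M j) (fun l => w l - v l) (h0 j) Finset.univ (h1 j) (w i - v i)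
      hmax ?_ k (Finset.mem_univ _) hk
    have h3 : ∑ l, M j l * (w l - v l) = - ∑ l, M j l * (v l - w l) := by
      rw [← Finset.sum_neg_distrib]
      exact Finset.sum_congr rfl fun l _ => by ring
    have hj' : w j - v j = w i - v i := hj
    rw [h3]
    linarith) h0 h1
  obtain ⟨j, hj⟩ := hF.1
  have h4 := heq j ⟨w, hw, M, hM, F, hF, hj⟩
  have h5 : w j - v j = w i - v i := hFI j hj
  have h6 := hmax i₀ (Finset.mem_univ _)
  linarith

/-- Let `g : ℝⁿ → ℝⁿ` be convex, order-preserving and additively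
homogeneous with at least one harmonic vector, and let `C` be its set of critical nodes.
For every super-harmonic vector `u` there exists a unique harmonic vector `v` coinciding
with `u` on `C`, and this `v` equals `lim_{k→∞} g^k(u)`. -/
theorem unique_harmonic_extension
    (n : ℕ) (g : (Fin n → ℝ) → (Fin n → ℝ))
    (hconv : ∀ i, ConvexOn ℝ Set.univ (fun x => g x i))
    (hop : ∀ x y : Fin n → ℝ, x ≤ y → g x ≤ g y)
    (hah : ∀ (lam : ℝ) (x : Fin n → ℝ), g (fun i => lam + x i) = fun i => lam + g x i)
    (u₀ : Fin n → ℝ) (hu₀ : g u₀ = u₀)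
    (u : Fin n → ℝ) (hu : g u ≤ u) :
    ∃ v : Fin n → ℝ,
      Tendsto (fun k : ℕ => g^[k] u) atTop (𝓝 v) ∧
      g v = v ∧ (∀ i : Fin n, IsCritical g i → v i = u i) ∧
      ∀ v' : Fin n → ℝ, g v' = v' → (∀ i : Fin n, IsCritical g i → v' i = u i) →
        v' = v := by
  have hcont := aux_lip g hop hah
  have hmono : Monotone g := fun x y h => hop x y h
  have hanti : Antitone (fun k : ℕ => g^[k] u) := by
    refine antitone_nat_of_succ_le fun k => ?_
    rw [Function.iterate_succ_apply]
    exact hmono.iterate k hu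
  have hbdd : ∃ c : ℝ, ∀ i, c + u₀ i ≤ u i := by
    refine ⟨-dist u u₀, fun i => ?_⟩
    have := dist_le_pi_dist u u₀ i
    rw [Real.dist_eq] at this
    have := neg_abs_le (u i - u₀ i)
    linarith
  obtain ⟨c, hc⟩ := hbdd
  have hlow : ∀ k : ℕ, (fun i => c + u₀ i) ≤ g^[k] u := by
    intro k
    induction k with
    | zero => exact hc
    | succ k ih =>
      rw [Function.iterate_succ_apply']
      have := hop _ _ ih
      rwa [hah, hu₀] at this
  let v : Fin n → ℝ := fun i => ⨅ k : ℕ, g^[k] u i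
  have hlim : Tendsto (fun k : ℕ => g^[k] u) atTop (𝓝 v) := by
    rw [tendsto_pi_nhds]
    intro i
    refine tendsto_atTop_ciInf (fun a b hab => hanti hab i) ⟨c + u₀ i, ?_⟩
    rintro _ ⟨k, rfl⟩
    exact hlow k i
  have hgv : g v = v := by
    have h1 : Tendsto (fun k : ℕ => g^[k + 1] u) atTop (𝓝 v) :=
      hlim.comp (tendsto_add_atTop_nat 1)
    have h2 : Tendsto (fun k : ℕ => g^[k + 1] u) atTop (𝓝 (g v)) := by
      simp only [Function.iterate_succ_apply']
      exact (hcont.tendsto v).comp hlim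
    exact tendsto_nhds_unique h2 h1
  have hvC : ∀ i : Fin n, IsCritical g i → v i = u i := by
    intro i hi
    have h1 : ∀ k : ℕ, g^[k] u i = u i := fun k =>
      le_antisymm (hanti (Nat.zero_le k) i) (aux_fix g hop u hu i hi k)
    simp [v, h1]
  refine ⟨v, hlim, hgv, hvC, fun v' hv' hv'C => le_antisymm ?_ ?_⟩
  · exact aux_unique g hconv hop hah v v' hgv hv' fun i hi => by rw [hvC i hi, hv'C i hi]
  · exact aux_unique g hconv hop hah v' v hv' hgv fun i hi => by rw [hvC i hi, hv'C i hi]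
end

section
/- Let g : ℝⁿ → ℝⁿ be convex, order-preserving and additively homogeneous with at least one harmonic vector, let C be its set of critical nodes, let u be super-harmonic with respect to g, and let v be the unique harmonic vector of g coinciding with u on C. Then v is the smallest super-harmonic vector dominating u on C: v is super-harmonic with v_i ≥ u_i for all i ∈ C, and every super-harmonic vector w satisfying w_i ≥ u_i for all i ∈ C satisfies w ≥ v. -/
open Filter Topology

/-- A finite convex function on `ℝⁿ` has a subgradient at each point. -/
theorem aux_exists_subgradient {n : ℕ} (f : (Fin n → ℝ) → ℝ) (hf : ConvexOn ℝ Set.univ f)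
    (u : Fin n → ℝ) : ∃ m : Fin n → ℝ, ∀ x, f u + ∑ j, m j * (x j - u j) ≤ f x := by
  have hcont : Continuous f := continuousOn_univ.1 (hf.continuousOn isOpen_univ)
  have hopen : IsOpen {p : (Fin n → ℝ) × ℝ | p.1 ∈ Set.univ ∧ f p.1 < p.2} := by
    simp only [Set.mem_univ, true_and]
    exact isOpen_lt (hcont.comp continuous_fst) continuous_snd
  obtain ⟨φ, hφ⟩ := geometric_hahn_banach_open_point (x := (u, f u))
    hf.convex_strict_epigraph hopen (by simp)
  have hdec : ∀ (x : Fin n → ℝ) (t : ℝ), φ (x, t) = φ (x, 0) + t * φ (0, 1) := by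
    intro x t
    have h : ((x, t) : (Fin n → ℝ) × ℝ) = (x, 0) + t • (0, 1) := by simp
    rw [h, map_add, map_smul, smul_eq_mul]
  set c := φ (0, 1) with hc
  have hlin : ∀ x : Fin n → ℝ, φ (x, 0) = ∑ j, x j * φ (Pi.single j 1, 0) := by
    intro x
    have h : ((x, 0) : (Fin n → ℝ) × ℝ) = ContinuousLinearMap.inl ℝ (Fin n → ℝ) ℝ x := rfl
    rw [h]
    change ((φ.comp (ContinuousLinearMap.inl ℝ (Fin n → ℝ) ℝ)) : (Fin n → ℝ) →ₗ[ℝ] ℝ) x = _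
    rw [LinearMap.pi_apply_eq_sum_univ]
    refine Finset.sum_congr rfl fun j _ => ?_
    rw [smul_eq_mul]
    have he : (fun i => if j = i then (1 : ℝ) else 0) = Pi.single j 1 := by
      ext i
      simp [Pi.single_apply, eq_comm]
    rw [he]
    rfl
  have hcneg : c < 0 := by
    have h := hφ (u, f u + 1) (by simp)
    rw [hdec, hdec u (f u)] at h
    linarith
  have hle : ∀ x, φ (x, 0) + f x * c ≤ φ (u, 0) + f u * c := by
    intro x
    refine le_of_forall_pos_le_add fun ε hε => ?_
    have h := hφ (x, f x + ε / (-c)) (by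
      simp only [Set.mem_univ, true_and, Set.mem_ofPred_eq]
      have := div_pos hε (neg_pos.2 hcneg)
      linarith)
    rw [hdec, hdec u (f u)] at h
    have h2 : ε / (-c) * c = -ε := by
      have := hcneg.ne
      field_simp
    nlinarith
  refine ⟨fun j => φ (Pi.single j 1, 0) / (-c), fun x => ?_⟩
  have hs : ∑ j, φ (Pi.single j 1, 0) / (-c) * (x j - u j) = (φ (x, 0) - φ (u, 0)) / (-c) := by
    rw [hlin x, hlin u, ← Finset.sum_sub_distrib, Finset.sum_div]
    refine Finset.sum_congr rfl fun j _ => ?_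
    ring
  rw [hs]
  have h := hle x
  have h3 : (φ (x, 0) - φ (u, 0)) / (-c) ≤ f x - f u := by
    rw [div_le_iff₀ (neg_pos.2 hcneg)]
    linarith
  linarith

/-- A nonempty arc-closed set of a stochastic matrix contains a recurrence class. -/
theorem aux_exists_recClass {n : ℕ} (M : Matrix (Fin n) (Fin n) ℝ) (h0 : ∀ i j, 0 ≤ M i j)
    (h1 : ∀ i, ∑ j, M i j = 1) (S : Finset (Fin n)) (hS : S.Nonempty)
    (hcl : ∀ i ∈ S, ∀ j, 0 < M i j → j ∈ S) : ∃ F, F ⊆ S ∧ IsRecClass M F := by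
  classical
  obtain ⟨F, hFS, hF⟩ := Set.Finite.exists_le_minimal
    (s := {T : Finset (Fin n) | T.Nonempty ∧ ∀ i ∈ T, ∀ j, 0 < M i j → j ∈ T})
    (Set.toFinite _) (a := S) ⟨hS, hcl⟩
  obtain ⟨hne, hFcl⟩ := hF.prop
  refine ⟨F, hFS, hne, ?_, hFcl, ?_⟩
  · intro i hi j hj
    have hreach : ∀ k, Relation.ReflTransGen (fun a b => 0 < M a b) i k → k ∈ F := by
      intro k hk
      induction hk with
      | refl => exact hi
      | tail _ hbc ih => exact hFcl _ ih _ hbc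
    let R : Finset (Fin n) :=
      Finset.univ.filter fun k => Relation.ReflTransGen (fun a b => 0 < M a b) i k
    have hR : R ∈ {T : Finset (Fin n) | T.Nonempty ∧ ∀ i ∈ T, ∀ j, 0 < M i j → j ∈ T} := by
      refine ⟨⟨i, by simp [R, Relation.ReflTransGen.refl]⟩, ?_⟩
      intro a ha b hab
      simp only [R, Finset.mem_filter, Finset.mem_univ, true_and] at ha ⊢
      exact ha.tail hab
    have hRF : R ≤ F := fun k hk => hreach k (by simpa [R] using hk)
    have := hF.le_of_le hR hRF hj
    simpa [R] using this
  · intro i hi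
    rw [← h1 i]
    refine Finset.sum_subset (Finset.subset_univ _) fun j _ hj => ?_
    exact le_antisymm (not_lt.1 fun h => hj (hFcl i hi j h)) (h0 i j)

/-- Let `g : ℝⁿ → ℝⁿ` be convex, order-preserving and additively
homogeneous with at least one harmonic vector, let `C` be its set of critical nodes, let
`u` be super-harmonic and let `v` be the (unique) harmonic vector coinciding with `u` on
`C`.  Then `v` is the smallest super-harmonic vector dominating `u` on `C`: `v` is
super-harmonic, dominates `u` on `C`, and every super-harmonic vector dominating `u` on
`C` dominates `v`. -/
theorem harmonic_extension_is_smallest_superharmonic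
    (n : ℕ) (g : (Fin n → ℝ) → (Fin n → ℝ))
    (hconv : ∀ i, ConvexOn ℝ Set.univ (fun x => g x i))
    (hop : ∀ x y : Fin n → ℝ, x ≤ y → g x ≤ g y)
    (hah : ∀ (lam : ℝ) (x : Fin n → ℝ), g (fun i => lam + x i) = fun i => lam + g x i)
    (u₀ : Fin n → ℝ) (hu₀ : g u₀ = u₀)
    (u : Fin n → ℝ) (hu : g u ≤ u)
    (v : Fin n → ℝ) (hv : g v = v) (hvC : ∀ i : Fin n, IsCritical g i → v i = u i) :
    (g v ≤ v ∧ ∀ i : Fin n, IsCritical g i → u i ≤ v i) ∧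
    ∀ w : Fin n → ℝ, g w ≤ w → (∀ i : Fin n, IsCritical g i → u i ≤ w i) → v ≤ w := by
  refine ⟨⟨hv.le, fun i hi => (hvC i hi).ge⟩, fun w hw hwC => ?_⟩
  choose M hM using fun i => aux_exists_subgradient (fun x => g x i) (hconv i) v
  have hMsub : (Matrix.of M) ∈ Subdiff g v := by
    intro x i
    simpa [Matrix.mulVec, dotProduct] using hM i x
  have h0 : ∀ i j, 0 ≤ M i j := by
    intro i j
    have h := hM i (v - Pi.single j 1)
    have h2 : g (v - Pi.single j 1) i ≤ g v i := by
      refine hop _ _ ?_ i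
      intro k
      by_cases hk : k = j
      · subst hk; simp
      · simp [hk]
    simp [Pi.single_apply] at h
    linarith
  have h1 : ∀ i, ∑ j, M i j = 1 := by
    intro i
    have ha := hM i (fun k => 1 + v k)
    have hb := hM i (fun k => -1 + v k)
    simp only [hah] at ha hb
    simp at ha hb
    linarith
  by_contra hcon
  obtain ⟨i₀, hi₀⟩ : ∃ i, w i < v i := by
    by_contra h
    push Not at h
    exact hcon h
  obtain ⟨m, -, hm⟩ := Finset.exists_min_image Finset.univ (fun i => w i - v i) ⟨i₀, by simp⟩
  have hm' : ∀ j, w m - v m ≤ w j - v j := fun j => hm j (by simp)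
  have hneg : w m - v m < 0 := by have := hm' i₀; linarith
  let S : Finset (Fin n) := Finset.univ.filter fun i => w i - v i = w m - v m
  have hScl : ∀ i ∈ S, ∀ j, 0 < (Matrix.of M) i j → j ∈ S := by
    intro i hi j hij
    simp only [S, Finset.mem_filter, Finset.mem_univ, true_and, Matrix.of_apply] at hi hij ⊢
    have h := hM i w
    have hgw := hw i
    have hgv : g v i = v i := congrFun hv i
    have hsum : ∑ k, M i k * ((w k - v k) - (w m - v m)) ≤ 0 := by
      have : ∑ k, M i k * ((w k - v k) - (w m - v m))
          = ∑ k, M i k * (w k - v k) - (∑ k, M i k) * (w m - v m) := by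
        rw [Finset.sum_mul, ← Finset.sum_sub_distrib]
        exact Finset.sum_congr rfl fun k _ => by ring
      rw [this, h1 i]
      linarith
    have hterm : ∀ k ∈ Finset.univ, 0 ≤ M i k * ((w k - v k) - (w m - v m)) := fun k _ =>
      mul_nonneg (h0 i k) (sub_nonneg.2 (hm' k))
    have hz := (Finset.sum_eq_zero_iff_of_nonneg hterm).1
      (le_antisymm hsum (Finset.sum_nonneg hterm)) j (Finset.mem_univ j)
    rcases mul_eq_zero.1 hz with h' | h'
    · exact absurd h' hij.ne'
    · linarith
  obtain ⟨F, hFS, hF⟩ := aux_exists_recClass (Matrix.of M) h0 h1 S ⟨m, by simp [S]⟩ hScl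
  obtain ⟨i, hi⟩ := hF.1
  have hcrit : IsCritical g i := ⟨v, hv, Matrix.of M, hMsub, F, hF, hi⟩
  have hiS := hFS hi
  simp only [S, Finset.mem_filter, Finset.mem_univ, true_and] at hiS
  have e1 := hvC i hcrit
  have e2 := hwC i hcrit
  linarith
end

section
/- Let g : ℝⁿ → ℝⁿ be convex (every coordinate g_i : ℝⁿ → ℝ is a finite convex function), let u ∈ ℝⁿ, let N ⊆ {1,…,n} with complement C, and define h : ℝ^N → ℝ^N by h(y) = r_N(g(ι_N(y, u_C))). Then ∂h(u_N) = {M_{NN} : M ∈ ∂g(u)}, where M_{NN} denotes the N×N submatrix of M. -/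
open Filter Topology

/-- The subdifferential of a (convex) self-map `g` of `ℝ^ι` at `u`: the set of matrices
`M` such that `g(x) − g(u) ≥ M(x − u)` componentwise for all `x`. -/
def SubdiffG {ι : Type*} [Fintype ι] (g : (ι → ℝ) → (ι → ℝ)) (u : ι → ℝ) :
    Set (Matrix ι ι ℝ) :=
  {M | ∀ (x : ι → ℝ) (i : ι), g u i + M.mulVec (x - u) i ≤ g x i}

lemma hb_aux {E : Type*} [AddCommGroup E] [Module ℝ E] (f : E → ℝ)
    (hf : ConvexOn ℝ Set.univ f) (h0 : f 0 = 0) (p : Submodule ℝ E) (L : E →ₗ[ℝ] ℝ)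
    (hL : ∀ x ∈ p, L x ≤ f x) :
    ∃ L' : E →ₗ[ℝ] ℝ, (∀ x ∈ p, L' x = L x) ∧ ∀ x, L' x ≤ f x := by
  let s : PointedCone ℝ (E × ℝ) :=
    { carrier := {q | ∃ t : ℝ, 0 < t ∧ f (t • q.1) ≤ t * q.2}
      zero_mem' := ⟨1, one_pos, by simp [h0]⟩
      add_mem' := by
        rintro ⟨x, r⟩ ⟨y, q⟩ ⟨t, ht, h1⟩ ⟨v, hv, h2⟩
        refine ⟨t * v / (t + v), by positivity, ?_⟩
        have h := hf.2 (Set.mem_univ (t • x)) (Set.mem_univ (v • y))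
          (show 0 ≤ v / (t + v) by positivity) (show 0 ≤ t / (t + v) by positivity)
          (by field_simp; ring)
        have e : (t * v / (t + v)) • (x + y)
            = (v / (t + v)) • t • x + (t / (t + v)) • v • y := by
          rw [smul_add, smul_smul, smul_smul]
          congr 2 <;> ring
        simp only [Prod.mk_add_mk] at *
        rw [e]
        refine h.trans ?_
        have h3 := mul_le_mul_of_nonneg_left h1 (show 0 ≤ v / (t + v) by positivity)
        have h4 := mul_le_mul_of_nonneg_left h2 (show 0 ≤ t / (t + v) by positivity)
        simp only [smul_eq_mul]
        calc _ ≤ _ := add_le_add h3 h4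
          _ = _ := by ring
      smul_mem' := by
        rintro ⟨c, hc⟩ ⟨x, r⟩ ⟨t, ht, h1⟩
        rcases hc.eq_or_lt with rfl | hc'
        · exact ⟨1, one_pos, by simp [h0, Nonneg.mk_smul]⟩
        · refine ⟨t / c, by positivity, ?_⟩
          have e : (t / c) • c • x = t • x := by
            rw [smul_smul]; congr 1; field_simp
          simp only [Nonneg.mk_smul, Prod.smul_mk, smul_eq_mul] at *
          rw [e]
          refine h1.trans (le_of_eq ?_)
          field_simp }
  let F : (E × ℝ) →ₗ[ℝ] ℝ := LinearMap.snd ℝ E ℝ - L ∘ₗ LinearMap.fst ℝ E ℝ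
  obtain ⟨G, hG1, hG2⟩ := riesz_extension s ⟨p.prod ⊤, F.domRestrict _⟩
    (by
      rintro ⟨⟨x, r⟩, hx⟩ ⟨t, ht, h1⟩
      have hx' : x ∈ p := hx.1
      have h2 := (hL _ (p.smul_mem t hx')).trans h1
      simp only [map_smul, smul_eq_mul] at h2
      have h3 := le_of_mul_le_mul_left h2 ht
      change 0 ≤ r - L x
      linarith)
    (by
      rintro ⟨y, r⟩
      refine ⟨⟨(0, f y - r), ⟨p.zero_mem, trivial⟩⟩, 1, one_pos, ?_⟩
      simp)
  have hG : ∀ x ∈ p, ∀ r, G (x, r) = r - L x := fun x hx r => hG1 ⟨(x, r), ⟨hx, trivial⟩⟩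
  refine ⟨-(G ∘ₗ LinearMap.inl ℝ E ℝ), fun x hx => by simp [hG x hx], fun x => ?_⟩
  have h1 := hG2 (x, f x) ⟨1, one_pos, by simp⟩
  have h2 : G (x, f x) = G (x, 0) + G (0, f x) := by rw [← map_add]; simp
  rw [h2, hG 0 p.zero_mem] at h1
  simp at h1 ⊢
  linarith

lemma row_aux {n : ℕ} (g : (Fin n → ℝ) → ℝ) (hg : ConvexOn ℝ Set.univ g) (u : Fin n → ℝ)
    (p : Submodule ℝ (Fin n → ℝ)) (a : Fin n → ℝ)
    (ha : ∀ x ∈ p, g u + ∑ j, a j * x j ≤ g (u + x)) :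
    ∃ b : Fin n → ℝ, (∀ x ∈ p, ∑ j, b j * x j = ∑ j, a j * x j) ∧
      ∀ x, g u + ∑ j, b j * (x j - u j) ≤ g x := by
  have hc : ConvexOn ℝ Set.univ (fun x => g (u + x) - g u) := by
    have := (hg.translate_right u).sub (concaveOn_const (g u) convex_univ)
    rw [Set.preimage_univ] at this
    exact this
  obtain ⟨L, h1, h2⟩ := hb_aux _ hc (by simp) p (Fintype.linearCombination ℝ a) (by
    intro x hx
    have := ha x hx
    simp only [Fintype.linearCombination_apply, smul_eq_mul]
    simp only [mul_comm (x _)]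
    linarith)
  have key : ∀ x, L x = ∑ j, L (Pi.single j 1) * x j := by
    intro x
    rw [L.pi_apply_eq_sum_univ x]
    refine Finset.sum_congr rfl fun j _ => ?_
    rw [smul_eq_mul, mul_comm]
    congr 2
    ext k
    simp [Pi.single_apply, eq_comm]
  refine ⟨fun j => L (Pi.single j 1), fun x hx => ?_, fun x => ?_⟩
  · rw [← key, h1 x hx]
    simp [Fintype.linearCombination_apply, mul_comm]
  · have h3 := h2 (x - u)
    rw [key] at h3
    simp at h3
    linarith

/-- Let `g : ℝⁿ → ℝⁿ` have convex (finite-valued) coordinates, let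
`u ∈ ℝⁿ`, let `N ⊆ {1,…,n}` with complement `C`, and define `h : ℝ^N → ℝ^N` by
`h(y) = r_N (g (ι_N(y, u_C)))`.  Then `∂h(u_N) = { M_{NN} : M ∈ ∂g(u) }`. -/
theorem subdiff_restriction
    (n : ℕ) (g : (Fin n → ℝ) → (Fin n → ℝ))
    (hconv : ∀ i, ConvexOn ℝ Set.univ (fun x => g x i))
    (u : Fin n → ℝ) (N : Finset (Fin n)) :
    SubdiffG
        (fun (y : {i : Fin n // i ∈ N} → ℝ) (i : {i : Fin n // i ∈ N}) =>
          g (fun j => if hj : j ∈ N then y ⟨j, hj⟩ else u j) i.1)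
        (fun i : {i : Fin n // i ∈ N} => u i.1)
      = {Q : Matrix {i : Fin n // i ∈ N} {i : Fin n // i ∈ N} ℝ |
          ∃ M ∈ SubdiffG g u, Q = fun i j => M i.1 j.1} := by
  ext Q
  have hself : (fun j => if hj : j ∈ N then (fun i : {i : Fin n // i ∈ N} => u i.1) ⟨j, hj⟩
      else u j) = u := by
    ext j; simp
  have hsum : ∀ F : Fin n → ℝ, (∀ j, j ∉ N → F j = 0) →
      ∑ j, F j = ∑ j : {i : Fin n // i ∈ N}, F j.1 := by
    intro F hF
    rw [Finset.sum_coe_sort N F]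
    exact (Finset.sum_subset (Finset.subset_univ _) (fun j _ hj => hF j hj)).symm
  constructor
  · intro hQ
    let p : Submodule ℝ (Fin n → ℝ) :=
      { carrier := {x | ∀ j, j ∉ N → x j = 0}
        zero_mem' := fun _ _ => rfl
        add_mem' := fun {x y} hx hy j hj => by simp [hx j hj, hy j hj]
        smul_mem' := fun c x hx j hj => by simp [hx j hj] }
    have H : ∀ i, ∃ b : Fin n → ℝ, (∀ hi : i ∈ N, ∀ j : {i : Fin n // i ∈ N}, b j.1 = Q ⟨i, hi⟩ j) ∧
        ∀ x, g u i + ∑ j, b j * (x j - u j) ≤ g x i := by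
      intro i
      by_cases hi : i ∈ N
      · obtain ⟨b, hb1, hb2⟩ := row_aux (fun x => g x i) (hconv i) u p
          (fun j => if hj : j ∈ N then Q ⟨i, hi⟩ ⟨j, hj⟩ else 0) (by
            intro x hx
            have h := hQ (fun j => u j.1 + x j.1) ⟨i, hi⟩
            beta_reduce at h
            rw [hself] at h
            have e : (fun j => if hj : j ∈ N then
                (fun j : {i : Fin n // i ∈ N} => u j.1 + x j.1) ⟨j, hj⟩ else u j) = u + x := by
              ext j
              by_cases hj : j ∈ N
              · simp [hj]
              · simp [hj, hx j hj]
            rw [e] at h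
            rw [hsum _ (fun j hj => by simp [hj])]
            simpa [Matrix.mulVec, dotProduct] using h)
        refine ⟨b, fun _ j => ?_, hb2⟩
        have := hb1 (Pi.single j.1 1) (by
          intro k hk
          have : k ≠ j.1 := fun h => hk (h ▸ j.2)
          simp [this])
        simpa [Pi.single_apply] using this
      · obtain ⟨b, hb1, hb2⟩ := row_aux (fun x => g x i) (hconv i) u ⊥ 0 (by
          intro x hx
          rw [Submodule.mem_bot] at hx
          simp [hx])
        exact ⟨b, fun h => absurd h hi, hb2⟩
    choose b hb1 hb2 using H
    refine ⟨b, fun x i => ?_, ?_⟩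
    · simpa [Matrix.mulVec, dotProduct] using hb2 i x
    · ext i j
      exact (hb1 i.1 i.2 j).symm
  · rintro ⟨M, hM, rfl⟩ y i
    have h := hM (fun j => if hj : j ∈ N then y ⟨j, hj⟩ else u j) i.1
    beta_reduce
    rw [hself]
    refine le_trans (le_of_eq ?_) h
    congr 1
    simp only [Matrix.mulVec, dotProduct]
    rw [hsum _ (fun j hj => by simp [hj])]
    simp
end

section
/- Let g : ℝⁿ → ℝⁿ be order-preserving, nonexpansive in the sup-norm, and possess a cycle time χ(g) = lim_{k→∞} g^k(y)/k (independent of y). If t ↦ tη + v is a super-invariant half-line of g, meaning g(tη + v) ≤ (t+1)η + v for all sufficiently large t, then χ(g) ≤ η. -/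
open Filter Topology

/-- Let `g : ℝⁿ → ℝⁿ` be order-preserving, nonexpansive in the
sup-norm (the distance on `Fin n → ℝ` is the sup-distance), and possess a cycle time
`χ(g) = lim_{k→∞} g^k(y)/k` (independent of `y`).  If `t ↦ tη + v` is a super-invariant
half-line of `g`, i.e. `g(tη + v) ≤ (t+1)η + v` for all sufficiently large `t`, then
`χ(g) ≤ η`. -/
theorem cycleTime_le_slope_of_superinvariant
    (n : ℕ) (g : (Fin n → ℝ) → (Fin n → ℝ))
    (hop : ∀ x y : Fin n → ℝ, x ≤ y → g x ≤ g y)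
    (hne : ∀ x y : Fin n → ℝ, dist (g x) (g y) ≤ dist x y)
    (χ : Fin n → ℝ)
    (hχ : ∀ y : Fin n → ℝ,
      Tendsto (fun k : ℕ => fun i => g^[k] y i / k) atTop (𝓝 χ))
    (η v : Fin n → ℝ) (T : ℝ)
    (hsup : ∀ t ≥ T, g (fun i => t * η i + v i) ≤ fun i => (t + 1) * η i + v i) :
    χ ≤ η := by
  have key : ∀ k : ℕ, g^[k] (fun i => T * η i + v i) ≤ fun i => (T + k) * η i + v i := by
    intro k
    induction k with
    | zero => simp
    | succ k ih =>
      rw [Function.iterate_succ_apply']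
      refine (hop _ _ ih).trans ?_
      have h := hsup (T + k) (by have : (0:ℝ) ≤ k := Nat.cast_nonneg k
                                 linarith)
      push_cast
      rw [← add_assoc]
      exact h
  intro i
  have h1 := (tendsto_pi_nhds.1 (hχ (fun i => T * η i + v i))) i
  have h2 : Tendsto (fun k : ℕ => (T * η i + v i) / (k : ℝ) + η i) atTop (𝓝 (0 + η i)) :=
    (tendsto_const_div_atTop_nhds_zero_nat _).add tendsto_const_nhds
  rw [zero_add] at h2
  refine le_of_tendsto_of_tendsto h1 h2 ?_
  filter_upwards [eventually_gt_atTop 0] with k hk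
  have hk' : (0:ℝ) < k := Nat.cast_pos.2 hk
  rw [div_le_iff₀ hk', add_mul, div_mul_cancel₀ _ hk'.ne']
  have := key k i
  simp only at this
  linarith
end
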